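/- arXiv:1909.03340 — 5 statements merged into one kernel-verified Lean document; each statement's English description precedes it below -/
import Mathlib

section
/- For a free ultrafilter p on ℕ the following are equivalent: (a) p is selective; (b) for every function f : ℕ → ℕ there exists A ∈ p such that the restriction of f to A is either constant or injective; (c) for every function c : [ℕ]² → 2 on the two-element subsets of ℕ there exists A ∈ p such that c is constant on [A]² (the two-element subsets of A). -/
/-!
The substance is the Ramsey property (c), derived from (b) through a diagonal intersection:
if `S n ∈ p` for every `n`, then some `A ∈ p` satisfies `b ∈ S a` whenever `a < b` in `A`
(`exists_diagonal`). Given a colouring `c`, for each `n` one colour `i n` satisfies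
`{m | c {n, m} = i n} ∈ p`; the function `i` is constant on a set of `p`, and the diagonal
intersection of these sets, cut down to that set, is homogeneous.

For the diagonal intersection, (b) is used twice. Applied to the first `n` with `b ≤ n` or
`b ∉ S n`, it makes this function `f` injective, hence finite-to-one, on a set of `p`, so that
`f b > a` as soon as `b` is large compared with `a`. Applied to the index of the block of a
sufficiently sparse partition of `ℕ` into intervals, it yields a set of `p` meeting each block at
most once; keeping only the blocks of one parity separates its elements enough.

Property (b) follows from (a) applied to the fibres of the given function, and (c) gives (a) by
colouring a pair according to whether its elements lie in the same piece of the partition.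
-/

/-- An ultrafilter on `ℕ` is *free* if it contains all cofinite sets. -/
def IsFreeUf (p : Ultrafilter ℕ) : Prop := (p : Filter ℕ) ≤ Filter.cofinite

/-- The selectivity (Ramsey) property: for every partition of `ℕ`, either one piece
belongs to the ultrafilter, or there is a set in the ultrafilter meeting every piece
in at most one point. -/
def SelectivePartitionProp (p : Ultrafilter ℕ) : Prop :=
  ∀ A : ℕ → Set ℕ, (Pairwise fun m n => Disjoint (A m) (A n)) → (⋃ n, A n) = Set.univ →
    (∃ n, A n ∈ p) ∨ ∃ B ∈ p, ∀ n, (B ∩ A n).Subsingleton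

/-- A selective (Ramsey) ultrafilter: a free ultrafilter with the selectivity property. -/
def IsSelectiveUf (p : Ultrafilter ℕ) : Prop := IsFreeUf p ∧ SelectivePartitionProp p

/-- `p` and `q` are Rudin–Keisler incomparable: there is no map pushing `p` to `q`
and no map pushing `q` to `p`. -/
def RKIncomparable (p q : Ultrafilter ℕ) : Prop :=
  (¬ ∃ f : ℕ → ℕ, Ultrafilter.map f p = q) ∧ (¬ ∃ g : ℕ → ℕ, Ultrafilter.map g q = p)

/-- A free ultrafilter contains all final segments of `ℕ`. -/
lemma IsFreeUf.Ioi_mem {p : Ultrafilter ℕ} (hp : IsFreeUf p) (n : ℕ) : Set.Ioi n ∈ p := by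
  have h : (Set.Ioi n) ∈ Filter.cofinite := by
    rw [Filter.mem_cofinite, Set.compl_Ioi]
    exact Set.finite_Iic n
  exact hp h

/-- A two-valued function is constant on a set of any ultrafilter. -/
lemma exists_mem_fin_two (p : Ultrafilter ℕ) (f : ℕ → Fin 2) : ∃ i, {m | f m = i} ∈ p := by
  rcases p.mem_or_compl_mem {m | f m = 0} with h | h
  · exact ⟨0, h⟩
  · refine ⟨1, Filter.mem_of_superset h fun m hm => ?_⟩
    exact Fin.eq_one_of_ne_zero _ hm

/-- A form of the Q-point property: for every `g` there is a set of `p` so sparse that, for `a < b`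
in it, `b` is at least the value of `g` at some number larger than `a`. -/
lemma exists_sparse {p : Ultrafilter ℕ} (hp : IsFreeUf p)
    (h : ∀ f : ℕ → ℕ, ∃ A ∈ p, (∃ c, ∀ a ∈ A, f a = c) ∨ Set.InjOn f A)
    (g : ℕ → ℕ) (hg : ∀ n, n < g n) :
    ∃ B ∈ p, ∀ a ∈ B, ∀ b ∈ B, a < b → ∃ k, a < k ∧ g k ≤ b := by
  classical
  -- The endpoints of the blocks are the iterates of `g` at `0`.
  set k : ℕ → ℕ := fun j => g^[j] 0 with hk
  have hks : ∀ j, k (j + 1) = g (k j) := fun j => Function.iterate_succ_apply' g j 0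
  have hmono : StrictMono k := strictMono_nat_of_lt_succ fun j => by rw [hks]; exact hg _
  have hex : ∀ m, ∃ j, m < k j := fun m => ⟨m + 1, (Nat.lt_succ_self m).trans_le (hmono.le_apply)⟩
  set r : ℕ → ℕ := fun m => Nat.find (hex m) with hr
  have hr1 : ∀ m, m < k (r m) := fun m => Nat.find_spec (hex m)
  have hr2 : ∀ m j, j < r m → k j ≤ m := fun m j hj => not_lt.mp (Nat.find_min (hex m) hj)
  obtain ⟨B, hB, hB'⟩ := h r
  obtain ⟨i, hi⟩ := exists_mem_fin_two p fun m => Fin.ofNat 2 (r m)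
  have hinj : Set.InjOn r B := by
    rcases hB' with ⟨c, hc⟩ | hinj
    · -- Blocks are bounded, so no block belongs to the free ultrafilter.
      obtain ⟨m, hmB, hm⟩ := p.nonempty_of_mem (Filter.inter_mem hB (hp.Ioi_mem (k c)))
      have h1 := hr1 m
      rw [hc m hmB] at h1
      exact absurd h1 (not_lt.mpr (le_of_lt hm))
    · exact hinj
  refine ⟨B ∩ _, Filter.inter_mem hB hi, ?_⟩
  rintro a ⟨haB, ha⟩ b ⟨hbB, hb⟩ hab
  have hne : r a ≠ r b := fun e => hab.ne (hinj haB hbB e)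
  have hpar : r a % 2 = r b % 2 := by
    have := congrArg Fin.val (ha.trans hb.symm)
    simpa [Fin.ofNat] using this
  have hle : r a ≤ r b := by
    by_contra hlt
    have h1 := hr2 a (r b) (not_le.mp hlt)
    have h2 := hr1 b
    omega
  refine ⟨k (r a), hr1 a, ?_⟩
  rw [← hks]
  exact hr2 b _ (by omega)

/-- Under property (b), countably many sets `S n` of `p` have a diagonal pseudo-intersection in `p`:
a set `A` whose elements above any `a ∈ A` all lie in `S a`. -/
lemma exists_diagonal {p : Ultrafilter ℕ} (hp : IsFreeUf p)
    (h : ∀ f : ℕ → ℕ, ∃ A ∈ p, (∃ c, ∀ a ∈ A, f a = c) ∨ Set.InjOn f A)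
    (S : ℕ → Set ℕ) (hS : ∀ n, S n ∈ p) :
    ∃ A ∈ p, ∀ a ∈ A, ∀ b ∈ A, a < b → b ∈ S a := by
  classical
  have hex : ∀ m, ∃ n, m ≤ n ∨ m ∉ S n := fun m => ⟨m, Or.inl le_rfl⟩
  set f : ℕ → ℕ := fun m => Nat.find (hex m) with hf
  have hf1 : ∀ m, m ≤ f m ∨ m ∉ S (f m) := fun m => Nat.find_spec (hex m)
  have hf2 : ∀ m n, n < f m → m ∈ S n := fun m n hn => by
    have := Nat.find_min (hex m) hn
    push Not at this
    exact this.2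
  obtain ⟨A, hA, hA'⟩ := h f
  have hinj : Set.InjOn f A := by
    rcases hA' with ⟨c, hc⟩ | hinj
    · obtain ⟨m, hmA, hm, hmS⟩ := p.nonempty_of_mem
        (Filter.inter_mem hA (Filter.inter_mem (hp.Ioi_mem c) (hS c)))
      have h1 := hf1 m
      rw [hc m hmA] at h1
      exact (h1.elim (not_le.mpr hm) fun h2 => h2 hmS).elim
    · exact hinj
  have hfin : ∀ a, ∃ N, a < N ∧ ∀ b ∈ A, N ≤ b → a < f b := by
    intro a
    have hF : (A ∩ f ⁻¹' Set.Iic a).Finite := by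
      refine Set.Finite.of_finite_image ((Set.finite_Iic a).subset ?_)
        (hinj.mono Set.inter_subset_left)
      rintro _ ⟨x, hx, rfl⟩
      exact hx.2
    obtain ⟨M, hM⟩ := hF.bddAbove
    refine ⟨max a M + 1, by omega, fun b hb hN => ?_⟩
    by_contra hlt
    have := hM ⟨hb, not_lt.mp hlt⟩
    omega
  choose g hg1 hg2 using hfin
  obtain ⟨B, hB, hB'⟩ := exists_sparse hp h g hg1
  refine ⟨A ∩ B, Filter.inter_mem hA hB, ?_⟩
  rintro a ⟨-, haB⟩ b ⟨hbA, hbB⟩ hab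
  obtain ⟨k, hak, hkb⟩ := hB' a haB b hbB hab
  exact hf2 b a (hak.trans (hg2 k b hbA hkb))

theorem selective_tfae (p : Ultrafilter ℕ) (hp : IsFreeUf p) :
    ([SelectivePartitionProp p,
      ∀ f : ℕ → ℕ, ∃ A ∈ p, (∃ c, ∀ a ∈ A, f a = c) ∨ Set.InjOn f A,
      ∀ c : Sym2 ℕ → Fin 2, ∃ A ∈ p, ∃ i : Fin 2,
        ∀ a ∈ A, ∀ b ∈ A, a ≠ b → c s(a, b) = i] : List Prop).TFAE := by
  classical
  tfae_have 1 → 2 := by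
    intro h f
    have hdisj : Pairwise fun m n => Disjoint (f ⁻¹' {m}) (f ⁻¹' {n}) := fun m n hmn =>
      Set.disjoint_left.mpr fun x hx hx' => hmn (hx.symm.trans hx')
    have hun : (⋃ n, f ⁻¹' {n}) = Set.univ := by
      ext x
      simp
    rcases h _ hdisj hun with ⟨n, hn⟩ | ⟨B, hB, hB'⟩
    · exact ⟨_, hn, Or.inl ⟨n, fun a ha => ha⟩⟩
    · exact ⟨B, hB, Or.inr fun a ha b hb e => hB' (f b) ⟨ha, e⟩ ⟨hb, rfl⟩⟩
  tfae_have 2 → 3 := by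
    intro h c
    choose i hi using fun n => exists_mem_fin_two p fun m => c s(n, m)
    obtain ⟨j, hj⟩ := exists_mem_fin_two p i
    obtain ⟨A, hA, hA'⟩ := exists_diagonal hp h _ hi
    have key : ∀ a ∈ A ∩ {m | i m = j}, ∀ b ∈ A ∩ {m | i m = j}, a < b → c s(a, b) = j := by
      rintro a ⟨ha, haj⟩ b ⟨hb, -⟩ hab
      exact (hA' a ha b hb hab).trans haj
    refine ⟨_, Filter.inter_mem hA hj, j, fun a ha b hb hab => ?_⟩
    rcases hab.lt_or_gt with hlt | hlt
    · exact key a ha b hb hlt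
    · rw [Sym2.eq_swap]
      exact key b hb a ha hlt
  tfae_have 3 → 1 := by
    intro h A hdisj hun
    obtain ⟨H, hH, i, hi⟩ := h fun z => if ∃ n, ∀ x ∈ z, x ∈ A n then 0 else 1
    have hcol : ∀ a b, (∃ n, ∀ x ∈ s(a, b), x ∈ A n) ↔ ∃ n, a ∈ A n ∧ b ∈ A n := by
      intro a b
      simp
    by_cases hi0 : i = 0
    · -- All pairs lie in one piece, so `H` is contained in the piece of any of its elements.
      left
      obtain ⟨a, ha⟩ := p.nonempty_of_mem hH
      obtain ⟨n, hn⟩ := Set.mem_iUnion.mp (hun ▸ Set.mem_univ a)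
      refine ⟨n, Filter.mem_of_superset hH fun b hb => ?_⟩
      by_cases hab : a = b
      · exact hab ▸ hn
      · have h1 := hi a ha b hb hab
        rw [hi0] at h1
        have h2 : ∃ n, ∀ x ∈ s(a, b), x ∈ A n := by
          by_contra hno
          simp only [if_neg hno] at h1
          exact one_ne_zero h1
        obtain ⟨m, hma, hmb⟩ := (hcol a b).mp h2
        by_cases hmn : m = n
        · exact hmn ▸ hmb
        · exact (Set.disjoint_left.mp (hdisj hmn) hma hn).elim
    · right
      refine ⟨H, hH, fun n a ha b hb => ?_⟩
      by_contra hab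
      have h1 := hi a ha.1 b hb.1 hab
      simp only [if_pos ((hcol a b).mpr ⟨n, ha.2, hb.2⟩)] at h1
      exact hi0 h1.symm
  tfae_finish
end

section
/- Let p and q be ultrafilters on ℕ. Then there exist functions f, g : ℕ → ℕ with f⋆(p) = q and g⋆(q) = p if and only if there exists a bijection h : ℕ → ℕ such that h⋆(p) = q. -/
/-!
The substantial direction rests on the following fact (`eventually_eq_self`): if `k⋆(p) = p`, then
`k` is the identity on a set in `p`. Indeed, a set `E` such that `n ∈ E ↔ k n ∉ E` holds
for `p`-almost every `n` would contradict `k⋆(p) = p`. Such a set exists whenever `k n < n` holds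
`p`-almost everywhere (parity of the number of steps for which the `k`-orbit keeps descending), and
whenever `n < k n` holds `p`-almost everywhere (parity of the position of `n` in its orbit,
relative to a chosen representative of the grand orbit).

Applied to `k = g ∘ f`, this makes `f` injective on some set `A ∈ p`. One of the two parity classes
belongs to `p` and one to `q`, so `A` can be shrunk to `B ∈ p` such that both `B` and `f '' B` have
infinite complement. The complements are then equinumerous, so `f` restricted to `B` extends to a
bijection of `ℕ`, which agrees with `f` on `B` and therefore also sends `p` to `q`.
-/

/-- An invariant ultrafilter admits no almost everywhere alternating predicate. -/
lemma not_eventually_alternating {p : Ultrafilter ℕ} {k : ℕ → ℕ} (hk : Ultrafilter.map k p = p)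
    (E : ℕ → Prop) : ¬ ∀ᶠ n in (p : Filter ℕ), (E (k n) ↔ ¬ E n) := by
  intro h
  have key : (∀ᶠ n in (p : Filter ℕ), E (k n)) ↔ ∀ᶠ n in (p : Filter ℕ), E n := by
    have h1 : k ⁻¹' {n | E n} ∈ p ↔ {n | E n} ∈ p := by
      rw [← Ultrafilter.mem_map, hk]
    exact h1
  rw [Filter.eventually_congr h, Ultrafilter.eventually_not] at key
  tauto

/-- The number of steps for which the `k`-orbit of `n` strictly descends. -/
def descentLength (k : ℕ → ℕ) (n : ℕ) : ℕ :=
  if k n < n then descentLength k (k n) + 1 else 0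
termination_by n

lemma not_eventually_lt {p : Ultrafilter ℕ} {k : ℕ → ℕ} (hk : Ultrafilter.map k p = p) :
    ¬ ∀ᶠ n in (p : Filter ℕ), k n < n := by
  intro h
  refine not_eventually_alternating hk (fun n => Even (descentLength k n)) ?_
  filter_upwards [h] with n hn
  rw [descentLength.eq_1 k n, if_pos hn, Nat.even_add_one, not_not]

/-- A map with `n < k n` everywhere has an acyclic functional graph, which is therefore
two-colourable. -/
lemma exists_alternating_of_gt {k : ℕ → ℕ} (hk : ∀ n, n < k n) :
    ∃ E : ℕ → Prop, ∀ n, (E (k n) ↔ ¬ E n) := by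
  have mono : ∀ x, StrictMono fun i => k^[i] x := fun x =>
    strictMono_nat_of_lt_succ fun i => by
      rw [Function.iterate_succ_apply']; exact hk _
  let s : Setoid ℕ :=
    { r := fun x y => ∃ i j, k^[i] x = k^[j] y
      iseqv :=
        { refl := fun x => ⟨0, 0, rfl⟩
          symm := fun ⟨i, j, h⟩ => ⟨j, i, h.symm⟩
          trans := by
            rintro x y z ⟨i, j, h⟩ ⟨a, b, h'⟩
            refine ⟨a + i, j + b, ?_⟩
            rw [Function.iterate_add_apply, h, ← Function.iterate_add_apply, add_comm a j,
              Function.iterate_add_apply, h', ← Function.iterate_add_apply] } }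
  let r : ℕ → ℕ := fun x => (Quotient.mk s x).out
  have hr : ∀ x, ∃ i j, k^[i] x = k^[j] (r x) := fun x =>
    Setoid.symm (Quotient.mk_out (s := s) x)
  have hrk : ∀ x, r (k x) = r x := by
    intro x
    have : Quotient.mk s (k x) = Quotient.mk s x := Quotient.sound ⟨0, 1, rfl⟩
    simp only [r, this]
  -- The difference `i - j` depends only on `x`, since orbits never revisit a point.
  have uniq : ∀ x y i j a b, k^[i] x = k^[j] y → k^[a] x = k^[b] y → a + j = i + b := by
    intro x y i j a b h h'
    apply (mono y).injective
    change k^[a + j] y = k^[i + b] y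
    rw [Function.iterate_add_apply, ← h, ← Function.iterate_add_apply, add_comm a i,
      Function.iterate_add_apply, h', ← Function.iterate_add_apply]
  refine ⟨fun x => ∃ i j, k^[i] x = k^[j] (r x) ∧ Even (i + j), fun x => ?_⟩
  simp only [hrk]
  constructor
  · rintro ⟨i, j, h, e⟩ ⟨a, b, h', e'⟩
    rw [← Function.iterate_succ_apply] at h
    have := uniq _ _ _ _ _ _ h h'
    grind
  · intro hne
    obtain ⟨i, j, h⟩ := hr x
    refine ⟨i, j + 1, ?_, ?_⟩
    · rw [← Function.iterate_succ_apply, Function.iterate_succ_apply',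
        Function.iterate_succ_apply', h]
    · by_contra hodd
      exact hne ⟨i, j, h, by grind⟩

lemma not_eventually_gt {p : Ultrafilter ℕ} {k : ℕ → ℕ} (hk : Ultrafilter.map k p = p) :
    ¬ ∀ᶠ n in (p : Filter ℕ), n < k n := by
  intro h
  -- Modify `k` off a set of `p` so that it increases everywhere.
  obtain ⟨E, hE⟩ := exists_alternating_of_gt (k := fun n => max (k n) (n + 1))
    (fun n => by grind)
  refine not_eventually_alternating hk E ?_
  filter_upwards [h] with n hn
  have := hE n
  rwa [max_eq_left (by omega)] at this

/-- A self-map of `ℕ` preserving an ultrafilter is the identity on a set of that ultrafilter. -/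
lemma eventually_eq_self {p : Ultrafilter ℕ} {k : ℕ → ℕ} (hk : Ultrafilter.map k p = p) :
    ∀ᶠ n in (p : Filter ℕ), k n = n := by
  have h1 := Ultrafilter.eventually_not.2 (not_eventually_lt hk)
  have h2 := Ultrafilter.eventually_not.2 (not_eventually_gt hk)
  filter_upwards [h1, h2] with n _ _
  omega

lemma exists_mem_infinite_compl (p : Ultrafilter ℕ) : ∃ D ∈ p, Dᶜ.Infinite := by
  rcases p.mem_or_compl_mem {n | Even n} with h | h
  · refine ⟨_, h, Set.infinite_of_injective_forall_mem (f := fun n : ℕ => 2 * n + 1) ?_ ?_⟩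
    · intro a b; simp
    · intro n; simp
  · refine ⟨_, h, Set.infinite_of_injective_forall_mem (f := fun n : ℕ => 2 * n) ?_ ?_⟩
    · intro a b; simp
    · intro n; simp

lemma exists_bijective_extension {f : ℕ → ℕ} {B : Set ℕ} (hf : Set.InjOn f B)
    (h1 : Bᶜ.Infinite) (h2 : (f '' B)ᶜ.Infinite) :
    ∃ h : ℕ → ℕ, Function.Bijective h ∧ ∀ n ∈ B, h n = f n := by
  classical
  have := h1.to_subtype
  have := h2.to_subtype
  obtain ⟨e⟩ : Nonempty (↥(Bᶜ) ≃ ↥((f '' B)ᶜ)) := nonempty_equiv_of_countable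
  let H : ℕ ≃ ℕ := (Equiv.Set.sumCompl B).symm.trans
    ((Equiv.sumCongr (Equiv.Set.imageOfInjOn f B hf) e).trans (Equiv.Set.sumCompl (f '' B)))
  refine ⟨H, H.bijective, fun n hn => ?_⟩
  simp [H, Equiv.Set.sumCompl_symm_apply_of_mem hn, Equiv.Set.imageOfInjOn]

theorem rk_equiv_iff_bijection (p q : Ultrafilter ℕ) :
    ((∃ f : ℕ → ℕ, Ultrafilter.map f p = q) ∧ (∃ g : ℕ → ℕ, Ultrafilter.map g q = p)) ↔
      ∃ h : ℕ → ℕ, Function.Bijective h ∧ Ultrafilter.map h p = q := by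
  constructor
  · rintro ⟨⟨f, hf⟩, g, hg⟩
    have hA : ∀ᶠ n in (p : Filter ℕ), g (f n) = n :=
      eventually_eq_self (k := g ∘ f) (by rw [← Ultrafilter.map_map, hf, hg])
    obtain ⟨C, hC, hC'⟩ := exists_mem_infinite_compl p
    obtain ⟨D, hD, hD'⟩ := exists_mem_infinite_compl q
    have hfD : f ⁻¹' D ∈ p := by rwa [← Ultrafilter.mem_map, hf]
    let B : Set ℕ := {n | g (f n) = n} ∩ (C ∩ f ⁻¹' D)
    have hB : B ∈ (p : Filter ℕ) := Filter.inter_mem hA (Filter.inter_mem hC hfD)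
    obtain ⟨h, hbij, heq⟩ := exists_bijective_extension (f := f) (B := B)
      (fun a ha b hb hab => by rw [← ha.1, ← hb.1, hab])
      (hC'.mono (Set.compl_subset_compl.2 fun n hn => hn.2.1))
      (hD'.mono (Set.compl_subset_compl.2 (by rintro _ ⟨n, hn, rfl⟩; exact hn.2.2)))
    refine ⟨h, hbij, ?_⟩
    rw [← hf]
    apply Ultrafilter.coe_injective
    rw [Ultrafilter.coe_map, Ultrafilter.coe_map]
    exact Filter.map_congr (Filter.mem_of_superset hB heq)
  · rintro ⟨h, hbij, hh⟩
    refine ⟨⟨h, hh⟩, (Equiv.ofBijective h hbij).symm, ?_⟩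
    rw [← hh, Ultrafilter.map_map]
    have : (Equiv.ofBijective h hbij).symm ∘ h = id :=
      funext fun n => (Equiv.ofBijective h hbij).symm_apply_apply n
    rw [this, Ultrafilter.map_id]
end

section
/- A free ultrafilter p on ℕ is selective if and only if for every function f : ℕ → ℕ the pushforward f⋆(p) is either a principal ultrafilter or is RK-equivalent to p (that is, there exists g : ℕ → ℕ with g⋆(f⋆(p)) = p). In other words, the selective ultrafilters are exactly the minimal free ultrafilters in the Rudin–Keisler order. -/
/-- Parity of the number of strictly decreasing steps from `x` under iteration of `h`. -/
def descentParity (h : ℕ → ℕ) (x : ℕ) : Bool :=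
  if h x < x then !descentParity h (h x) else false
termination_by x

/-- Parity of the number of strictly increasing steps from `x` under iteration of `h`, stopped once
`N` is reached. -/
def ascentParity (h : ℕ → ℕ) (N x : ℕ) : Bool :=
  if x < N ∧ x < h x then !ascentParity h N (h x) else false
termination_by N - x

/-- If `h` fixes `p`, no two-colouring separates `x` from `h x` for `p`-almost all `x`. -/
lemma Ultrafilter.not_proper_coloring (p : Ultrafilter ℕ) {h : ℕ → ℕ} (hh : p.map h = p)
    (C : Set ℕ) : ¬ ∀ᶠ x in (p : Filter ℕ), (h x ∈ C ↔ x ∉ C) := by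
  intro H
  have key : ∀ D : Set ℕ, D ∈ p → h ⁻¹' D ∈ p := fun D hD => by
    rw [← Ultrafilter.mem_map, hh]; exact hD
  rcases p.mem_or_compl_mem C with hC | hC
  · obtain ⟨x, ⟨hx, h1⟩, h2⟩ :=
      p.nonempty_of_mem (Filter.inter_mem (Filter.inter_mem H (key _ hC)) hC)
    exact hx.1 h1 h2
  · obtain ⟨x, ⟨hx, h1⟩, h2⟩ :=
      p.nonempty_of_mem (Filter.inter_mem (Filter.inter_mem H (key _ hC)) hC)
    exact h1 (hx.2 h2)

/-- A map that fixes an ultrafilter is the identity on one of its sets. -/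
lemma fixedPoints_mem_of_map_eq_self (p : Ultrafilter ℕ) {h : ℕ → ℕ} (hh : p.map h = p) :
    {x | h x = x} ∈ p := by
  by_contra hne
  rw [← Ultrafilter.compl_mem_iff_notMem] at hne
  have hcover : {x | h x < x} ∪ {x | x < h x} ∈ p :=
    Filter.mem_of_superset hne fun x hx => lt_or_gt_of_ne hx
  rcases Ultrafilter.union_mem_iff.1 hcover with hlt | hgt
  · refine p.not_proper_coloring hh {x | descentParity h x = true} ?_
    filter_upwards [hlt] with x hx
    have e : descentParity h x = !descentParity h (h x) := by
      rw [descentParity, if_pos hx]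
    simp [e]
  · refine p.not_proper_coloring hh
      {x | ∀ᶠ N in (Filter.hyperfilter ℕ : Filter ℕ), ascentParity h N x = true} ?_
    filter_upwards [hgt] with x hx
    rw [← Ultrafilter.eventually_not]
    have hN : ∀ᶠ N in (Filter.hyperfilter ℕ : Filter ℕ), x < N :=
      Nat.hyperfilter_le_atTop (Filter.eventually_gt_atTop x)
    refine Filter.eventually_congr ?_
    filter_upwards [hN] with N hN
    have e : ascentParity h N x = !ascentParity h N (h x) := by
      rw [ascentParity, if_pos ⟨hN, hx⟩]
    simp [e]

theorem selective_iff_rk_minimal (p : Ultrafilter ℕ) (hp : IsFreeUf p) :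
    IsSelectiveUf p ↔
      ∀ f : ℕ → ℕ, (∃ a : ℕ, Ultrafilter.map f p = pure a) ∨
        ∃ g : ℕ → ℕ, Ultrafilter.map g (Ultrafilter.map f p) = p := by
  constructor
  · rintro ⟨-, hsel⟩ f
    rcases hsel (fun n => f ⁻¹' {n})
      (fun m n hmn => Disjoint.preimage f (Set.disjoint_singleton.2 hmn))
      (by ext x; simp) with ⟨n, hn⟩ | ⟨B, hB, hsub⟩
    · have hn' : ({n} : Set ℕ) ∈ Ultrafilter.map f p := Ultrafilter.mem_map.2 hn
      obtain ⟨a, -, ha⟩ := Ultrafilter.eq_pure_of_finite_mem (Set.finite_singleton n) hn'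
      exact Or.inl ⟨a, ha⟩
    · have hinj : Set.InjOn f B := fun x hx y hy hxy =>
        hsub (f y) ⟨hx, hxy⟩ ⟨hy, rfl⟩
      refine Or.inr ⟨Function.invFunOn f B, ?_⟩
      rw [Ultrafilter.map_map]
      apply Ultrafilter.coe_injective
      rw [Ultrafilter.coe_map]
      have : Function.invFunOn f B ∘ f =ᶠ[(p : Filter ℕ)] id := by
        filter_upwards [hB] with x hx
        exact hinj.leftInvOn_invFunOn hx
      rw [Filter.map_congr this, Filter.map_id]
  · refine fun H => ⟨hp, fun A hdisj hcov => ?_⟩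
    have hex : ∀ x, ∃ n, x ∈ A n := fun x => Set.mem_iUnion.1 (hcov ▸ Set.mem_univ x)
    choose f hf using hex
    have huniq : ∀ {x n}, x ∈ A n → f x = n := fun {x n} hx => by
      by_contra hne
      exact Set.disjoint_left.1 (hdisj hne) (hf x) hx
    rcases H f with ⟨a, ha⟩ | ⟨g, hg⟩
    · refine Or.inl ⟨a, ?_⟩
      have hmem : ({a} : Set ℕ) ∈ Ultrafilter.map f p := by
        rw [ha]; exact Ultrafilter.mem_pure.2 rfl
      refine Filter.mem_of_superset (Ultrafilter.mem_map.1 hmem) fun x hx => ?_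
      have hxa : f x = a := hx
      exact hxa ▸ hf x
    · rw [Ultrafilter.map_map] at hg
      refine Or.inr ⟨_, fixedPoints_mem_of_map_eq_self p hg, fun n x hx y hy => ?_⟩
      have hx1 : g (f x) = x := hx.1
      have hy1 : g (f y) = y := hy.1
      rw [← hx1, ← hy1, huniq hx.2, huniq hy.2]
end

section
/- If p is a selective ultrafilter on ℕ and f : ℕ → ℕ is finite-to-one (every point has finite preimage), then f⋆(p) is a selective ultrafilter that is RK-equivalent to p. -/
/-- The partition property is inherited by images under arbitrary maps. -/
theorem SelectivePartitionProp.map {p : Ultrafilter ℕ} (hp : SelectivePartitionProp p)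
    (f : ℕ → ℕ) : SelectivePartitionProp (Ultrafilter.map f p) := by
  intro A hd hu
  rcases hp (fun n => f ⁻¹' A n) (fun m n h => (hd h).preimage f)
    (by rw [← Set.preimage_iUnion, hu, Set.preimage_univ]) with ⟨n, hn⟩ | ⟨B, hB, hs⟩
  · exact Or.inl ⟨n, hn⟩
  · refine Or.inr ⟨f '' B, Filter.image_mem_map hB, fun n => ?_⟩
    rintro _ ⟨⟨x, hx, rfl⟩, hxA⟩ _ ⟨⟨y, hy, rfl⟩, hyA⟩
    exact congrArg f (hs n ⟨hx, hxA⟩ ⟨hy, hyA⟩)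

theorem IsSelectiveUf.exists_injOn {p : Ultrafilter ℕ} (hp : IsSelectiveUf p)
    {f : ℕ → ℕ} (hf : ∀ n : ℕ, (f ⁻¹' {n}).Finite) : ∃ B ∈ p, Set.InjOn f B := by
  rcases hp.2 (fun n => f ⁻¹' {n})
    (fun m n h => (Set.disjoint_singleton.2 h).preimage f)
    (by ext x; simp) with ⟨n, hn⟩ | ⟨B, hB, hs⟩
  · exact absurd hn (Ultrafilter.compl_mem_iff_notMem.1 (hp.1 (hf n).compl_mem_cofinite))
  · exact ⟨B, hB, fun x hx y hy h => hs (f y) ⟨hx, h⟩ ⟨hy, rfl⟩⟩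

theorem selective_map_finiteToOne (p : Ultrafilter ℕ) (hp : IsSelectiveUf p)
    (f : ℕ → ℕ) (hf : ∀ n : ℕ, (f ⁻¹' {n}).Finite) :
    IsSelectiveUf (Ultrafilter.map f p) ∧
      (∃ h : ℕ → ℕ, Ultrafilter.map h p = Ultrafilter.map f p) ∧
      (∃ g : ℕ → ℕ, Ultrafilter.map g (Ultrafilter.map f p) = p) := by
  refine ⟨⟨?_, hp.2.map f⟩, ⟨f, rfl⟩, ?_⟩
  · exact (Filter.Tendsto.cofinite_of_finite_preimage_singleton hf).mono_left hp.1
  · obtain ⟨B, hB, hinj⟩ := hp.exists_injOn hf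
    refine ⟨Function.invFunOn f B, ?_⟩
    rw [Ultrafilter.map_map]
    apply Ultrafilter.coe_injective
    rw [Ultrafilter.coe_map]
    have h : Function.invFunOn f B ∘ f =ᶠ[(p : Filter ℕ)] id :=
      Filter.mem_of_superset hB fun x hx => hinj.leftInvOn_invFunOn hx
    rw [Filter.map_congr h, Filter.map_id]
end

section
/- Let (p_k : k ∈ ℕ) be a family of pairwise RK-incomparable selective ultrafilters on ℕ. For each k ∈ ℕ let (a_{k,i} : i ∈ ℕ) be a strictly increasing sequence of natural numbers such that {a_{k,i} : i ∈ ℕ} ∈ p_k and i < a_{k,i} for all k, i ∈ ℕ. Then there exists a family (I_k : k ∈ ℕ) of infinite subsets of ℕ such that: (a) {a_{k,i} : i ∈ I_k} ∈ p_k for each k ∈ ℕ; (b) I_i ∩ I_j = ∅ whenever i ≠ j; and (c) the family of closed integer intervals ([i, a_{k,i}] : k ∈ ℕ, i ∈ I_k) is pairwise disjoint. -/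
lemma IsFreeUf.notMem_of_finite {p : Ultrafilter ℕ} (hp : IsFreeUf p) {s : Set ℕ}
    (hs : s.Finite) : s ∉ p := by
  intro h
  have h2 : sᶜ ∈ p := hp hs.compl_mem_cofinite
  exact Ultrafilter.compl_mem_iff_notMem.1 h2 h

/-- A function on a selective ultrafilter is constant or injective on a large set. -/
lemma IsSelectiveUf.const_or_injOn {p : Ultrafilter ℕ} (hp : IsSelectiveUf p) (φ : ℕ → ℕ) :
    (∃ n, φ ⁻¹' {n} ∈ p) ∨ ∃ B ∈ p, Set.InjOn φ B := by
  have hdisj : Pairwise fun m n => Disjoint (φ ⁻¹' {m}) (φ ⁻¹' {n}) := fun m n hmn =>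
    Set.disjoint_left.2 fun x hx hy => hmn (hx.symm.trans hy)
  have hcover : (⋃ n, φ ⁻¹' {n}) = Set.univ := by
    ext x
    simp
  rcases hp.2 (fun n => φ ⁻¹' {n}) hdisj hcover with h | ⟨B, hB, h⟩
  · exact Or.inl h
  · exact Or.inr ⟨B, hB, fun x hx y hy hxy => h (φ y) ⟨hx, hxy⟩ ⟨hy, rfl⟩⟩

/-- Selective ultrafilters are P-points. -/
lemma IsSelectiveUf.exists_pseudo_inter {p : Ultrafilter ℕ} (hp : IsSelectiveUf p)
    (B : ℕ → Set ℕ) (hB : ∀ n, B n ∈ p) : ∃ A ∈ p, ∀ n, (A \ B n).Finite := by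
  classical
  -- the first `n` with `x ∉ B n`, shifted by one; the value `0` marks the intersection
  let φ : ℕ → ℕ := fun x => if h : ∃ n, x ∉ B n then Nat.find h + 1 else 0
  rcases hp.const_or_injOn φ with ⟨n, hn⟩ | ⟨A, hA, hinj⟩
  · refine ⟨_, hn, fun m => ?_⟩
    rcases n with _ | n
    · convert Set.finite_empty
      refine Set.eq_empty_of_forall_notMem fun x hx => ?_
      have hex : ∃ n, x ∉ B n := ⟨m, hx.2⟩
      have h1 : φ x = 0 := hx.1
      simp only [φ, dif_pos hex] at h1
      omega
    · exfalso
      obtain ⟨x, hx, hxB⟩ := p.nonempty_of_mem (Filter.inter_mem hn (hB n))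
      have h1 : φ x = n + 1 := hx
      by_cases hex : ∃ n, x ∉ B n
      · simp only [φ, dif_pos hex] at h1
        have h2 := Nat.find_spec hex
        rw [Nat.succ_injective h1] at h2
        exact h2 hxB
      · simp only [φ, dif_neg hex] at h1
        omega
  · refine ⟨A, hA, fun m => ?_⟩
    refine Set.Finite.of_finite_image (f := φ) ((Set.finite_Iic (m + 1)).subset ?_)
      (hinj.mono Set.sdiff_subset)
    rintro _ ⟨x, hx, rfl⟩
    have hex : ∃ n, x ∉ B n := ⟨m, hx.2⟩
    simp only [φ, dif_pos hex, Set.mem_Iic]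
    have := Nat.find_min' hex hx.2
    omega

lemma exists_mem_notMem_of_ne {u v : Ultrafilter ℕ} (h : u ≠ v) : ∃ B ∈ u, B ∉ v := by
  by_contra! hc
  exact h (Ultrafilter.coe_le_coe.1 fun s hs => by
    by_contra hs'
    exact Ultrafilter.compl_mem_iff_notMem.1 (hc _ (Ultrafilter.compl_mem_iff_notMem.2 hs')) hs)

/-- The natural numbers `x` and `y` are at distance at least `2`. -/
def Apart (x y : ℕ) : Prop := x + 2 ≤ y ∨ y + 2 ≤ x

/-- An ultrafilter which is no image of another one can be separated from it with a gap. Only the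
images under the identity and the two unit shifts matter. -/
lemma exists_apart {u v : Ultrafilter ℕ} (h : ∀ s : ℕ → ℕ, Ultrafilter.map s v ≠ u) :
    ∃ B ∈ u, ∃ B' ∈ v, ∀ x ∈ B, ∀ y ∈ B', Apart x y := by
  obtain ⟨B₀, h₀, h₀'⟩ := exists_mem_notMem_of_ne (h id).symm
  obtain ⟨B₁, h₁, h₁'⟩ := exists_mem_notMem_of_ne (h (· + 1)).symm
  obtain ⟨B₂, h₂, h₂'⟩ := exists_mem_notMem_of_ne (h (· - 1)).symm
  rw [Ultrafilter.mem_map, ← Ultrafilter.compl_mem_iff_notMem] at h₀' h₁' h₂'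
  refine ⟨B₀ ∩ (B₁ ∩ B₂), Filter.inter_mem h₀ (Filter.inter_mem h₁ h₂), _,
    Filter.inter_mem h₀' (Filter.inter_mem h₁' h₂'), ?_⟩
  rintro x ⟨x0, x1, x2⟩ y ⟨y0, y1, y2⟩
  by_contra hc
  simp only [Apart] at hc
  have : x = y ∨ x = y + 1 ∨ x = y - 1 := by omega
  rcases this with rfl | rfl | rfl
  · exact y0 x0
  · exact y1 x1
  · exact y2 x2

/-- Countably many free P-points, none of which is an image of another, can be separated with gaps
simultaneously. -/
lemma exists_separated (r : ℕ → Ultrafilter ℕ) (hfree : ∀ k, IsFreeUf (r k))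
    (hP : ∀ k, ∀ B : ℕ → Set ℕ, (∀ n, B n ∈ r k) → ∃ A ∈ r k, ∀ n, (A \ B n).Finite)
    (hne : ∀ k l, k ≠ l → ∀ s : ℕ → ℕ, Ultrafilter.map s (r l) ≠ r k) :
    ∃ J : ℕ → Set ℕ, (∀ k, J k ∈ r k) ∧
      ∀ k l, k ≠ l → ∀ x ∈ J k, ∀ y ∈ J l, Apart x y := by
  have key : ∀ k l, ∃ B ∈ r k, ∃ B' ∈ r l, k ≠ l → ∀ x ∈ B, ∀ y ∈ B', Apart x y := by
    intro k l
    by_cases hkl : k = l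
    · exact ⟨_, Filter.univ_mem, _, Filter.univ_mem, fun h => (h hkl).elim⟩
    · obtain ⟨B, hB, B', hB', h⟩ := exists_apart (hne k l hkl)
      exact ⟨B, hB, B', hB', fun _ => h⟩
  choose B hB B' hB' hsep using key
  have hA := fun k => hP k (fun l => B k l ∩ B' l k)
    (fun l => Filter.inter_mem (hB k l) (hB' l k))
  choose A hA hfin using hA
  -- points of `A k` close to `A l` lie in, or next to, one of two finite differences
  have hclose : ∀ k l, k ≠ l → {x ∈ A k | ∃ y ∈ A l, ¬ Apart x y}.Finite := by
    intro k l hkl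
    have hF : (⋃ y ∈ A l \ (B l k ∩ B' k l), Set.Iic (y + 1)).Finite :=
      (hfin l k).biUnion fun y _ => Set.finite_Iic _
    refine ((hfin k l).union hF).subset ?_
    rintro x ⟨hx, y, hy, hxy⟩
    by_cases hxB : x ∈ B k l ∩ B' l k
    · right
      refine Set.mem_biUnion (x := y) ⟨hy, fun hyB => hxy ?_⟩ ?_
      · exact hsep k l hkl x hxB.1 y hyB.2
      · simp only [Apart] at hxy
        simp only [Set.mem_Iic]
        omega
    · exact Or.inl ⟨hx, hxB⟩
  have hbad : ∀ k, (⋃ l ∈ Set.Iio k, {x ∈ A k | ∃ y ∈ A l, ¬ Apart x y}).Finite := fun k =>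
    (Set.finite_Iio k).biUnion fun l hl => hclose k l (ne_of_gt hl)
  have hlt : ∀ k l, l < k →
      ∀ x ∈ A k \ (⋃ l ∈ Set.Iio k, {x ∈ A k | ∃ y ∈ A l, ¬ Apart x y}), ∀ y ∈ A l,
        Apart x y := by
    intro k l hlk x hx y hy
    by_contra hc
    exact hx.2 (Set.mem_biUnion (x := l) hlk ⟨hx.1, y, hy, hc⟩)
  refine ⟨fun k => A k \ (⋃ l ∈ Set.Iio k, {x ∈ A k | ∃ y ∈ A l, ¬ Apart x y}), fun k => ?_, ?_⟩
  · exact Filter.inter_mem (hA k)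
      (Ultrafilter.compl_mem_iff_notMem.2 ((hfree k).notMem_of_finite (hbad k)))
  · intro k l hkl x hx y hy
    rcases lt_or_gt_of_ne hkl with h | h
    · exact (hlt l k h y hy x hx.1).symm
    · exact hlt k l h x hx y hy.1

/-- A finite-to-one block map `h` so coarse that, for `k ≤ i`, skipping a whole block after `i`
goes beyond `a k i`. -/
lemma exists_block_map (a : ℕ → ℕ → ℕ) (hmono : ∀ k, StrictMono (a k)) :
    ∃ h : ℕ → ℕ, (∀ m, (h ⁻¹' {m}).Finite) ∧
      ∀ k i j, k ≤ i → h i + 2 ≤ h j → a k i < j := by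
  let n : ℕ → ℕ := fun m => (fun x => 1 + x + ∑ k ∈ Finset.range (x + 1), a k x)^[m] 0
  have hn : ∀ m, n (m + 1) = 1 + n m + ∑ k ∈ Finset.range (n m + 1), a k (n m) := fun m =>
    Function.iterate_succ_apply' _ m 0
  have hnm : StrictMono n := strictMono_nat_of_lt_succ fun m => by rw [hn]; omega
  have hex : ∀ i : ℕ, ∃ m : ℕ, i < n m := fun i => ⟨i + 1, hnm.id_le (i + 1)⟩
  refine ⟨fun i => Nat.find (hex i), fun m => ?_, fun k i j hki hij => ?_⟩
  · refine (Set.finite_Iio (n m)).subset fun i hi => ?_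
    have h1 := Nat.find_spec (hex i)
    have h2 : Nat.find (hex i) = m := hi
    rwa [h2] at h1
  · have h0 : Nat.find (hex i) + 2 ≤ Nat.find (hex j) := hij
    have h1 := Nat.find_spec (hex i)
    set m := Nat.find (hex i)
    have h2 : ¬ j < n (m + 1) := Nat.find_min (hex j) (by omega)
    have h3 : a k i ≤ a k (n m) := (hmono k).monotone h1.le
    have h4 : a k (n m) ≤ ∑ k ∈ Finset.range (n m + 1), a k (n m) :=
      Finset.single_le_sum (f := fun k => a k (n m)) (fun _ _ => Nat.zero_le _)
        (Finset.mem_range.2 (by omega))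
    have h5 := hn m
    omega

theorem selective_disjointification
    (p : ℕ → Ultrafilter ℕ) (hsel : ∀ k, IsSelectiveUf (p k))
    (hinc : ∀ k l, k ≠ l → RKIncomparable (p k) (p l))
    (a : ℕ → ℕ → ℕ) (hmono : ∀ k, StrictMono (a k))
    (hmem : ∀ k, Set.range (a k) ∈ p k)
    (hlt : ∀ k i, i < a k i) :
    ∃ I : ℕ → Set ℕ,
      (∀ k, (I k).Infinite) ∧
      (∀ k, a k '' I k ∈ p k) ∧
      (∀ k l, k ≠ l → Disjoint (I k) (I l)) ∧
      (∀ k i l j, i ∈ I k → j ∈ I l → (k, i) ≠ (l, j) →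
        Disjoint (Set.Icc i (a k i)) (Set.Icc j (a l j))) := by
  obtain ⟨h, hfin, hh⟩ := exists_block_map a hmono
  let f : ℕ → ℕ → ℕ := fun k => h ∘ Function.invFun (a k)
  have hf : ∀ k i, f k (a k i) = h i := fun k i =>
    congrArg h (Function.leftInverse_invFun (hmono k).injective i)
  have hfib : ∀ k m, f k ⁻¹' {m} ∉ p k := by
    intro k m hm
    refine (hsel k).1.notMem_of_finite (((hfin m).image (a k)).subset ?_)
      (Filter.inter_mem hm (hmem k))
    rintro _ ⟨hx, i, rfl⟩
    exact ⟨i, (hf k i).symm.trans hx, rfl⟩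
  have hC : ∀ k, ∃ C ∈ p k, Set.InjOn (f k) C := fun k =>
    ((hsel k).const_or_injOn (f k)).resolve_left fun ⟨m, hm⟩ => hfib k m hm
  choose C hC hinj using hC
  have hrfree : ∀ k, IsFreeUf (Ultrafilter.map (f k) (p k)) := by
    intro k s hs
    have hs' : sᶜ.Finite := hs
    rw [Ultrafilter.mem_coe, Ultrafilter.mem_map]
    by_contra hc
    rw [← Ultrafilter.compl_mem_iff_notMem] at hc
    -- a finite union of fibres lying in `p k` would contain a fibre in `p k`
    have h1 : (⋃ m ∈ sᶜ, f k ⁻¹' {m}) ∈ p k := by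
      rwa [Set.biUnion_preimage_singleton, Set.preimage_compl]
    obtain ⟨m, -, hm⟩ := (Ultrafilter.finite_biUnion_mem_iff hs').1 h1
    exact hfib k m hm
  have hrP : ∀ k, ∀ B : ℕ → Set ℕ, (∀ n, B n ∈ Ultrafilter.map (f k) (p k)) →
      ∃ A ∈ Ultrafilter.map (f k) (p k), ∀ n, (A \ B n).Finite := by
    intro k B hB
    obtain ⟨A, hA, hAB⟩ := (hsel k).exists_pseudo_inter (fun n => f k ⁻¹' B n) hB
    refine ⟨f k '' A, Filter.image_mem_map hA, fun n => ((hAB n).image (f k)).subset ?_⟩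
    rintro _ ⟨⟨x, hx, rfl⟩, hxB⟩
    exact ⟨x, ⟨hx, hxB⟩, rfl⟩
  have hrne : ∀ k l, k ≠ l → ∀ s : ℕ → ℕ,
      Ultrafilter.map s (Ultrafilter.map (f l) (p l)) ≠ Ultrafilter.map (f k) (p k) := by
    intro k l hkl s hs
    -- undoing `f k` on `C k` would turn `hs` into a map from `p l` to `p k`
    apply (hinc k l hkl).2
    let g := Function.invFunOn (f k) (C k)
    refine ⟨g ∘ s ∘ f l, ?_⟩
    rw [← Ultrafilter.map_map, ← Ultrafilter.map_map, hs, Ultrafilter.map_map]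
    refine Ultrafilter.coe_injective ?_
    rw [Ultrafilter.coe_map]
    have : (g ∘ f k) =ᶠ[(p k : Filter ℕ)] id :=
      Filter.mem_of_superset (hC k) fun x hx => (hinj k).leftInvOn_invFunOn hx
    rw [Filter.map_congr this, Filter.map_id]
  obtain ⟨J, hJ, hsep⟩ := exists_separated _ hrfree hrP hrne
  have hpar : ∀ k, ∃ e, f k ⁻¹' {m | m % 2 = e} ∈ p k := by
    intro k
    by_cases h0 : f k ⁻¹' {m | m % 2 = 0} ∈ p k
    · exact ⟨0, h0⟩
    · refine ⟨1, Filter.mem_of_superset (Ultrafilter.compl_mem_iff_notMem.2 h0) fun x hx => ?_⟩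
      simp only [Set.mem_compl_iff, Set.mem_preimage, Set.mem_ofPred_eq] at hx ⊢
      omega
  choose e he using hpar
  let I : ℕ → Set ℕ := fun k => {i | a k i ∈ C k ∧ h i ∈ J k ∧ h i % 2 = e k ∧ k ≤ i}
  have hI : ∀ k, a k '' I k ∈ p k := by
    intro k
    have h1 : (a k '' Set.Iio k)ᶜ ∈ p k := Ultrafilter.compl_mem_iff_notMem.2
      ((hsel k).1.notMem_of_finite ((Set.finite_Iio k).image _))
    have h2 : f k ⁻¹' J k ∈ p k := hJ k
    filter_upwards [h1, h2, hC k, he k, hmem k] with x x1 x2 x3 x4 x5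
    obtain ⟨i, rfl⟩ := x5
    rw [Set.mem_preimage, hf] at x2 x4
    refine ⟨i, ⟨x3, x2, x4, ?_⟩, rfl⟩
    by_contra hc
    exact x1 ⟨i, not_le.1 hc, rfl⟩
  have hapart : ∀ k i l j, i ∈ I k → j ∈ I l → (k, i) ≠ (l, j) → Apart (h i) (h j) := by
    rintro k i l j ⟨i1, i2, i3, i4⟩ ⟨j1, j2, j3, j4⟩ hne
    by_cases hkl : k = l
    · subst hkl
      have hij : h i ≠ h j := fun hc => hne <| by
        rw [(hmono k).injective (hinj k i1 j1 (by rw [hf, hf, hc]))]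
      simp only [Apart]
      omega
    · exact hsep k l hkl _ i2 _ j2
  refine ⟨I, fun k hk => (hsel k).1.notMem_of_finite (hk.image _) (hI k), hI, ?_, ?_⟩
  · intro k l hkl
    refine Set.disjoint_left.2 fun i hi hi' => ?_
    rcases hapart k i l i hi hi' (fun hc => hkl (congrArg Prod.fst hc)) with h1 | h1 <;> omega
  · intro k i l j hi hj hne
    refine Set.disjoint_left.2 fun x hx hy => ?_
    simp only [Set.mem_Icc] at hx hy
    rcases hapart k i l j hi hj hne with h1 | h1
    · have := hh k i j hi.2.2.2 h1
      omega
    · have := hh l j i hj.2.2.2 h1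
      omega
end
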